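/- arXiv:2002.00558 — 2 statements merged into one kernel-verified Lean document; each statement's English description precedes it below -/
import Mathlib

section
/- Let M ≥ 1 and let X have the Beta(1, M) distribution. Then E[(X − (1 − 1/M))₊] ≥ (1/(2M))·(2M)^{−M}. -/
open MeasureTheory

/-- The Beta(a, b) probability measure on `[0,1]`: the normalization of the measure on
`(0,1)` with density `x^(a−1)·(1−x)^(b−1)` with respect to Lebesgue measure. -/
noncomputable def betaMeasure (a b : ℝ) : Measure ℝ :=
  (((volume.restrict (Set.Ioo (0 : ℝ) 1)).withDensity
      (fun x => ENNReal.ofReal (x ^ (a - 1) * (1 - x) ^ (b - 1)))) Set.univ)⁻¹ •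
    (volume.restrict (Set.Ioo (0 : ℝ) 1)).withDensity
      (fun x => ENNReal.ofReal (x ^ (a - 1) * (1 - x) ^ (b - 1)))

/-!
The distribution Beta(1, M) has the tail `Pr[X > t] = (1 - t) ^ M` on `[0, 1]`, and
`(X - c)₊ ≥ t - c` on the event `X > t`, so `E[(X - c)₊] ≥ (t - c) (1 - t) ^ M` for every
`t ∈ [0, 1]`. Take `c = 1 - 1 / M`. For `M ≥ 1 / 2` the choice `t = 1 - 1 / (2M)` gives exactly
`(1 / (2M)) (2M) ^ (-M)`; for `M ≤ 1 / 2` the choice `t = 0` gives `1 / M - 1`, which is large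
enough by Bernoulli's inequality for exponents in `[0, 1]`.
-/

open Set

theorem rpow_neg_half_self_le_two_sub {u : ℝ} (hu : 0 < u) (hu1 : u ≤ 1) :
    u ^ (-(u / 2)) ≤ 2 - u := by
  have hinv : 1 ≤ u⁻¹ := (one_le_inv₀ hu).2 hu1
  calc u ^ (-(u / 2)) = (1 + (u⁻¹ - 1)) ^ (u / 2) := by
        rw [add_sub_cancel, Real.inv_rpow hu.le, Real.rpow_neg hu.le]
    _ ≤ 1 + u / 2 * (u⁻¹ - 1) :=
        rpow_one_add_le_one_add_mul_self (by linarith) (by linarith) (by linarith)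
    _ = 1 + (1 - u) / 2 := by field_simp
    _ ≤ 2 - u := by linarith

theorem sub_mul_measureReal_Ioi_le_integral_posPart {μ : Measure ℝ} [IsFiniteMeasure μ]
    (hμ : Integrable (fun x ↦ x) μ) (t c : ℝ) :
    (t - c) * μ.real (Ioi t) ≤ ∫ x, max (x - c) 0 ∂μ := by
  have hint : Integrable (fun x ↦ max (x - c) 0) μ := (hμ.sub (integrable_const c)).pos_part
  calc (t - c) * μ.real (Ioi t)
      ≤ ∫ x in Ioi t, max (x - c) 0 ∂μ :=
        setIntegral_ge_of_const_le_real measurableSet_Ioi (measure_ne_top μ _)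
          (fun x (hx : t < x) ↦ le_max_of_le_left (sub_le_sub_right hx.le c)) hint.integrableOn
    _ ≤ ∫ x, max (x - c) 0 ∂μ :=
        setIntegral_le_integral hint (.of_forall fun _ ↦ le_max_right _ _)

section BetaMeasure

variable {a b : ℝ}

theorem probabilityTheory_betaMeasure_eq_smul_withDensity (ha : 0 < a) (hb : 0 < b) :
    ProbabilityTheory.betaMeasure a b =
      ENNReal.ofReal (1 / ProbabilityTheory.beta a b) •
        (volume.restrict (Ioo (0 : ℝ) 1)).withDensity
          (fun x ↦ ENNReal.ofReal (x ^ (a - 1) * (1 - x) ^ (b - 1))) := by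
  rw [← withDensity_smul' _ _ ENNReal.ofReal_ne_top, ← withDensity_indicator measurableSet_Ioo,
    ProbabilityTheory.betaMeasure]
  congr 1
  ext x
  by_cases hx : x ∈ Ioo (0 : ℝ) 1
  · rw [indicator_of_mem hx, ProbabilityTheory.betaPDF_of_pos_lt_one hx.1 hx.2, mul_assoc,
      ENNReal.ofReal_mul (one_div_nonneg.2 (ProbabilityTheory.beta_pos ha hb).le), Pi.smul_apply,
      smul_eq_mul]
  · rw [indicator_of_notMem hx, ProbabilityTheory.betaPDF_eq, if_neg (mem_Ioo.not.1 hx),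
      ENNReal.ofReal_zero]

theorem betaMeasure_eq_probabilityTheory_betaMeasure (ha : 0 < a) (hb : 0 < b) :
    betaMeasure a b = ProbabilityTheory.betaMeasure a b := by
  have hsmul := probabilityTheory_betaMeasure_eq_smul_withDensity ha hb
  have hmass := (ProbabilityTheory.isProbabilityMeasureBeta ha hb).measure_univ
  rw [hsmul, Measure.smul_apply, smul_eq_mul] at hmass
  rw [hsmul, betaMeasure, ← ENNReal.eq_inv_of_mul_eq_one_left hmass]

theorem isProbabilityMeasure_betaMeasure (ha : 0 < a) (hb : 0 < b) :
    IsProbabilityMeasure (betaMeasure a b) := by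
  rw [betaMeasure_eq_probabilityTheory_betaMeasure ha hb]
  exact ProbabilityTheory.isProbabilityMeasureBeta ha hb

theorem ae_betaMeasure_mem_Ioo (a b : ℝ) : ∀ᵐ x ∂betaMeasure a b, x ∈ Ioo (0 : ℝ) 1 :=
  (Measure.smul_absolutelyContinuous.trans (withDensity_absolutelyContinuous _ _)).ae_le
    (ae_restrict_mem measurableSet_Ioo)

theorem integrable_id_betaMeasure (ha : 0 < a) (hb : 0 < b) :
    Integrable (fun x ↦ x) (betaMeasure a b) :=
  have := isProbabilityMeasure_betaMeasure ha hb
  .of_mem_Icc 0 1 aemeasurable_id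
    ((ae_betaMeasure_mem_Ioo a b).mono fun _ hx ↦ Ioo_subset_Icc_self hx)

theorem beta_one_left (hb : 0 < b) : ProbabilityTheory.beta 1 b = 1 / b := by
  rw [ProbabilityTheory.beta, Real.Gamma_one, one_mul, add_comm, Real.Gamma_add_one hb.ne',
    div_mul_cancel_right₀ (Real.Gamma_pos_of_pos hb).ne', one_div]

theorem setLIntegral_Ioo_one_sub_rpow (hb : 0 < b) {t : ℝ} (ht : t ≤ 1) :
    ∫⁻ x in Ioo t 1, ENNReal.ofReal ((1 - x) ^ (b - 1)) = ENNReal.ofReal ((1 - t) ^ b / b) := by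
  have hint : IntervalIntegrable (fun x : ℝ ↦ (1 - x) ^ (b - 1)) volume t 1 := by
    simpa using (intervalIntegral.intervalIntegrable_rpow' (a := 1 - t) (b := 0)
      (r := b - 1) (by linarith)).comp_sub_left 1
  have hnonneg : ∀ x ∈ Ioo t 1, 0 ≤ (1 - x) ^ (b - 1) :=
    fun x hx ↦ Real.rpow_nonneg (sub_nonneg.2 hx.2.le) _
  rw [← ofReal_integral_eq_lintegral_ofReal
      ((intervalIntegrable_iff_integrableOn_Ioo_of_le ht).1 hint)
      (ae_restrict_of_forall_mem measurableSet_Ioo hnonneg),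
    ← integral_Ioc_eq_integral_Ioo, ← intervalIntegral.integral_of_le ht,
    intervalIntegral.integral_comp_sub_left (fun x ↦ x ^ (b - 1)) 1,
    integral_rpow (Or.inl (by linarith)), sub_self, sub_add_cancel, Real.zero_rpow hb.ne',
    sub_zero]

theorem betaMeasure_one_real_Ioi (hb : 0 < b) {t : ℝ} (ht : t ∈ Icc (0 : ℝ) 1) :
    (betaMeasure 1 b).real (Ioi t) = (1 - t) ^ b := by
  have hinter : Ioi t ∩ Ioo 0 1 = Ioo t 1 := by
    rw [← Ioi_inter_Iio, ← inter_assoc, Ioi_inter_Ioi, sup_of_le_left ht.1, Ioi_inter_Iio]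
  have hnonneg : 0 ≤ (1 - t) ^ b := Real.rpow_nonneg (sub_nonneg.2 ht.2) b
  rw [betaMeasure_eq_probabilityTheory_betaMeasure one_pos hb,
    probabilityTheory_betaMeasure_eq_smul_withDensity one_pos hb, beta_one_left hb, one_div_one_div,
    measureReal_ennreal_smul_apply, measureReal_def, withDensity_apply _ measurableSet_Ioi,
    Measure.restrict_restrict measurableSet_Ioi, hinter]
  simp only [sub_self, Real.rpow_zero, one_mul]
  rw [setLIntegral_Ioo_one_sub_rpow hb ht.2, ENNReal.toReal_ofReal hb.le,
    ENNReal.toReal_ofReal (div_nonneg hnonneg hb.le), mul_div_cancel₀ _ hb.ne']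

theorem sub_mul_rpow_le_integral_posPart_betaMeasure_one (hb : 0 < b) {t : ℝ}
    (ht : t ∈ Icc (0 : ℝ) 1) (c : ℝ) :
    (t - c) * (1 - t) ^ b ≤ ∫ x, max (x - c) 0 ∂(betaMeasure 1 b) := by
  have := isProbabilityMeasure_betaMeasure one_pos hb
  rw [← betaMeasure_one_real_Ioi hb ht]
  exact sub_mul_measureReal_Ioi_le_integral_posPart (integrable_id_betaMeasure one_pos hb) t c

end BetaMeasure

theorem stmt11_general (M : ℝ) (hM : 0 < M) :
    (1 / (2 * M)) * (2 * M) ^ (-M) ≤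
      ∫ x, max (x - (1 - 1 / M)) 0 ∂(betaMeasure 1 M) := by
  have hM2 : 0 < 2 * M := by positivity
  rcases le_total 1 (2 * M) with hlarge | hsmall
  · have ht : 1 - 1 / (2 * M) ∈ Icc (0 : ℝ) 1 :=
      Icc.one_sub_mem ⟨by positivity, (div_le_one hM2).2 hlarge⟩
    have hgap : 1 - 1 / (2 * M) - (1 - 1 / M) = 1 / (2 * M) := by
      field_simp
      ring
    have htail : (1 - (1 - 1 / (2 * M))) ^ M = (2 * M) ^ (-M) := by
      rw [sub_sub_cancel, one_div, Real.inv_rpow hM2.le, Real.rpow_neg hM2.le]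
    have hmarkov := sub_mul_rpow_le_integral_posPart_betaMeasure_one hM ht (1 - 1 / M)
    rwa [hgap, htail] at hmarkov
  · calc 1 / (2 * M) * (2 * M) ^ (-M)
        ≤ 1 / (2 * M) * (2 - 2 * M) := by
          have hbern := rpow_neg_half_self_le_two_sub hM2 hsmall
          rw [mul_div_cancel_left₀ M two_ne_zero] at hbern
          gcongr
      _ = (0 - (1 - 1 / M)) * (1 - 0) ^ M := by
          rw [sub_zero, Real.one_rpow]
          field_simp
          ring
      _ ≤ _ := sub_mul_rpow_le_integral_posPart_betaMeasure_one hM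
          (left_mem_Icc.2 zero_le_one) (1 - 1 / M)

/-- **Beta part of Lemma 5.7 (δ-easiness of bounded-strength Beta priors).** If
`X ~ Beta(1, M)` then `E[(X − (1 − 1/M))₊] ≥ (1/(2M))·(2M)^(−M)`. -/
theorem stmt11 (M : ℝ) (hM : 1 ≤ M) :
    (1 / (2 * M)) * (2 * M) ^ (-M) ≤
      ∫ x, max (x - (1 - 1 / M)) 0 ∂(betaMeasure 1 M) :=
  stmt11_general M (zero_lt_one.trans_le hM)
end

section
/- Let P and P' be probability measures on [0,1] with dP = g dP' for a nondecreasing function g (so P MLR-dominates P'). Let μ be a random variable with law P and, conditionally on μ, let B_1, …, B_N be independent Bernoulli(μ) variables; set M = E[μ | B_1, …, B_N]. Analogously, let μ' have law P' with conditionally independent Bernoulli(μ') observations B'_1, …, B'_N, and set M' = E[μ' | B'_1, …, B'_N]. Then the law of M stochastically dominates the law of M': for every t ∈ ℝ, Pr[M ≥ t] ≥ Pr[M' ≥ t]. -/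
open MeasureTheory
open scoped ENNReal

/-- `B 0, …, B (N−1)` are, conditionally on `μ`, independent Bernoulli(`μ`) samples:
for every measurable `A ⊆ ℝ` and every outcome vector `b`, the joint probability is
given by integrating the Bernoulli likelihood against the law of `μ`. -/
def IsBernoulliSample {Ω : Type*} [MeasurableSpace Ω] (P : Measure Ω)
    (μ : Ω → ℝ) {N : ℕ} (B : Fin N → Ω → Bool) : Prop :=
  ∀ (A : Set ℝ), MeasurableSet A → ∀ b : Fin N → Bool,
    P (μ ⁻¹' A ∩ {ω | ∀ i, B i ω = b i}) =
      ∫⁻ x in A, ∏ i, ENNReal.ofReal (if b i then x else 1 - x) ∂(Measure.map μ P)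

/-!
Relative to the law `ν` of `μ'`, the joint density of the parameter and the outcomes `b` is
`ℓ b x` in the second model and `ℓ b x * g x` in the first, and `ℓ b` has monotone likelihood ratio
in the number of successes. Chebyshev's correlation inequality, which says that larger likelihood
ratio gives larger means, is used twice. Applied to the mean of `g` it shows that the two laws of
the outcomes are themselves ordered by likelihood ratio, so the success counts are stochastically
ordered. Applied to the mean of `x` it shows that, whenever the first model has at least as many
successes as the second, its posterior mean is at least as large. If `k` is the least number of
successes for which the second posterior mean reaches `t`, then
`{M' ≥ t} ⊆ {at least k successes}` and, almost surely, `{at least k successes} ⊆ {M ≥ t}`.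
-/

open scoped NNReal

section MonotoneLikelihoodRatio

variable {α R : Type*}

/-- The ratio `f / g` is nondecreasing on `S`. The inequality is cross-multiplied so that it remains
meaningful where the nonnegative functions `f` and `g` vanish. -/
def MLRDominatesOn [LE α] [Mul R] [LE R] (S : Set α) (f g : α → R) : Prop :=
  ∀ ⦃x⦄, x ∈ S → ∀ ⦃y⦄, y ∈ S → y ≤ x → f y * g x ≤ f x * g y

lemma MLRDominatesOn.mono [LE α] [Mul R] [LE R] {S S' : Set α} {f g : α → R}
    (h : MLRDominatesOn S f g) (hS : S' ⊆ S) : MLRDominatesOn S' f g :=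
  fun _ hx _ hy hyx ↦ h (hS hx) (hS hy) hyx

lemma MLRDominatesOn.mul_monotoneOn [Preorder α] {S : Set α} {f g u : α → ℝ≥0}
    (h : MLRDominatesOn S f g) (hu : MonotoneOn u S) :
    MLRDominatesOn S (fun x ↦ f x * u x) g := fun x hx y hy hyx ↦ by
  simpa only [mul_right_comm] using mul_le_mul' (h hx hy hyx) (hu hy hx hyx)

variable [MeasurableSpace α] [LinearOrder α] {ν : Measure α} [SFinite ν] {S : Set α}
  {f g : α → ℝ≥0} {w : α → ℝ}

/-- Chebyshev's argument: integrate `(w x - w y) * (f x * g y - f y * g x) ≥ 0` over `ν × ν`. -/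
theorem MLRDominatesOn.integral_mul_mul_integral_le (h : MLRDominatesOn S f g)
    (hS : ∀ᵐ x ∂ν, x ∈ S) (hw : MonotoneOn w S)
    (hf : Integrable (fun x ↦ (f x : ℝ)) ν) (hg : Integrable (fun x ↦ (g x : ℝ)) ν)
    (hfw : Integrable (fun x ↦ f x * w x) ν) (hgw : Integrable (fun x ↦ g x * w x) ν) :
    (∫ x, g x * w x ∂ν) * ∫ x, (f x : ℝ) ∂ν ≤ (∫ x, f x * w x ∂ν) * ∫ x, (g x : ℝ) ∂ν := by
  have cross_nonneg : ∀ x ∈ S, ∀ y ∈ S, 0 ≤ (w x - w y) * (f x * g y - f y * g x) := by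
    have of_le : ∀ x ∈ S, ∀ y ∈ S, y ≤ x → 0 ≤ (w x - w y) * (f x * g y - f y * g x) :=
      fun x hx y hy hyx ↦ mul_nonneg (sub_nonneg.2 (hw hy hx hyx))
        (sub_nonneg.2 (mod_cast h hx hy hyx))
    intro x hx y hy
    rcases le_total y x with hyx | hxy
    · exact of_le x hx y hy hyx
    · linarith [of_le y hy x hx hxy]
  have hS₂ : ∀ᵐ z ∂ν.prod ν, z.1 ∈ S ∧ z.2 ∈ S :=
    (Measure.quasiMeasurePreserving_fst.ae hS).and (Measure.quasiMeasurePreserving_snd.ae hS)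
  have key : ∫ z, (g z.1 * w z.1 * f z.2 + f z.1 * (g z.2 * w z.2)) ∂ν.prod ν ≤
      ∫ z, (f z.1 * w z.1 * g z.2 + g z.1 * (f z.2 * w z.2)) ∂ν.prod ν := by
    refine integral_mono_ae ((hgw.mul_prod hf).add (hf.mul_prod hgw))
      ((hfw.mul_prod hg).add (hg.mul_prod hfw)) ?_
    filter_upwards [hS₂] with z hz
    linarith [cross_nonneg z.1 hz.1 z.2 hz.2]
  rw [integral_add (hgw.mul_prod hf) (hf.mul_prod hgw),
    integral_add (hfw.mul_prod hg) (hg.mul_prod hfw)] at key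
  simp only [integral_prod_mul (fun x ↦ g x * w x) (fun x ↦ (f x : ℝ)),
    integral_prod_mul (fun x ↦ (f x : ℝ)) (fun x ↦ g x * w x),
    integral_prod_mul (fun x ↦ f x * w x) (fun x ↦ (g x : ℝ)),
    integral_prod_mul (fun x ↦ (g x : ℝ)) (fun x ↦ f x * w x)] at key
  linarith

end MonotoneLikelihoodRatio

/-- The mean of the probability density on `ℝ` proportional to `f` with respect to `ν`; it is the
posterior mean when `f` is prior density times likelihood. It has the junk value `0` if `f` has
zero mass. -/
noncomputable def densityMean (ν : Measure ℝ) (f : ℝ → ℝ≥0) : ℝ :=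
  (∫ x, f x * x ∂ν) / ∫ x, (f x : ℝ) ∂ν

theorem MLRDominatesOn.densityMean_le {ν : Measure ℝ} [SFinite ν] {S : Set ℝ} {f g : ℝ → ℝ≥0}
    (h : MLRDominatesOn S f g) (hS : ∀ᵐ x ∂ν, x ∈ S)
    (hf : 0 < ∫ x, (f x : ℝ) ∂ν) (hg : 0 < ∫ x, (g x : ℝ) ∂ν)
    (hf_id : Integrable (fun x ↦ f x * x) ν) (hg_id : Integrable (fun x ↦ g x * x) ν) :
    densityMean ν g ≤ densityMean ν f := by
  rw [densityMean, densityMean, div_le_div_iff₀ hg hf]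
  exact h.integral_mul_mul_integral_le hS (monotone_id.monotoneOn S)
    (.of_integral_ne_zero hf.ne') (.of_integral_ne_zero hg.ne') hf_id hg_id

lemma ae_measure_preimage_singleton_ne_zero {Ω β : Type*} [MeasurableSpace Ω]
    [MeasurableSpace β] [MeasurableSingletonClass β] [Countable β] {P : Measure Ω} {Y : Ω → β}
    (hY : Measurable Y) : ∀ᵐ ω ∂P, P (Y ⁻¹' {Y ω}) ≠ 0 := by
  refine ae_of_ae_map hY.aemeasurable (p := fun b ↦ P (Y ⁻¹' {b}) ≠ 0)
    (ae_iff_of_countable.2 fun b hb ↦ ?_)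
  rwa [Measure.map_apply hY (measurableSet_singleton b)] at hb

section JointDensity

variable {Ω α β : Type*} [MeasurableSpace Ω] [MeasurableSpace α] {P : Measure Ω}
  {X : Ω → α} {Y : Ω → β} {ν : Measure α} {f : β → α → ℝ≥0}

/-- The pair `(X, Y)`, with `Y` discrete, has joint density `(b, x) ↦ f b x` with respect to the
product of counting measure and `ν`, expressed separately on every fibre of `Y`. -/
def HasJointDensity (P : Measure Ω) (X : Ω → α) (Y : Ω → β) (ν : Measure α)
    (f : β → α → ℝ≥0) : Prop :=
  ∀ b, (P.restrict (Y ⁻¹' {b})).map X = ν.withDensity fun x ↦ f b x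

namespace HasJointDensity

lemma of_withDensity {g : α → ℝ≥0∞} (h : HasJointDensity P X Y (ν.withDensity g) f)
    (hg : Measurable g) (hg_top : ∀ᵐ x ∂ν, g x < ∞) (hf : ∀ b, Measurable (f b)) :
    HasJointDensity P X Y ν fun b x ↦ f b x * (g x).toNNReal := fun b ↦ by
  rw [h b, ← withDensity_mul ν hg (hf b).coe_nnreal_ennreal]
  refine withDensity_congr_ae ?_
  filter_upwards [hg_top] with x hx
  rw [ENNReal.coe_mul, ENNReal.coe_toNNReal hx.ne, Pi.mul_apply, mul_comm]

variable (h : HasJointDensity P X Y ν f) (hX : Measurable X) (hf : ∀ b, Measurable (f b))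
include h hX hf

lemma setIntegral_comp {φ : α → ℝ} (hφ : Measurable φ) (b : β) :
    ∫ ω in Y ⁻¹' {b}, φ (X ω) ∂P = ∫ x, f b x * φ x ∂ν := by
  rw [← integral_map hX.aemeasurable hφ.aestronglyMeasurable, h b,
    integral_withDensity_eq_integral_smul (hf b)]
  rfl

lemma integrable_mul {φ : α → ℝ} (hφ : Measurable φ) (hint : Integrable (fun ω ↦ φ (X ω)) P)
    (b : β) : Integrable (fun x ↦ f b x * φ x) ν := by
  have : Integrable φ ((P.restrict (Y ⁻¹' {b})).map X) :=
    (integrable_map_measure hφ.aestronglyMeasurable hX.aemeasurable).2 hint.restrict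
  rwa [h b, integrable_withDensity_iff_integrable_smul (hf b)] at this

lemma integrable [IsFiniteMeasure P] (b : β) : Integrable (fun x ↦ (f b x : ℝ)) ν := by
  simpa only [mul_one] using h.integrable_mul hX hf measurable_const (integrable_const (1 : ℝ)) b

lemma measureReal_preimage_singleton (b : β) : P.real (Y ⁻¹' {b}) = ∫ x, (f b x : ℝ) ∂ν := by
  simpa using h.setIntegral_comp hX hf (measurable_const (a := (1 : ℝ))) b

lemma ae_integral_pos [IsFiniteMeasure P] [Countable β] [MeasurableSpace β]
    [MeasurableSingletonClass β] (hY : Measurable Y) :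
    ∀ᵐ ω ∂P, 0 < ∫ x, (f (Y ω) x : ℝ) ∂ν := by
  filter_upwards [ae_measure_preimage_singleton_ne_zero hY] with ω hω
  rw [← h.measureReal_preimage_singleton hX hf]
  exact ENNReal.toReal_pos hω (measure_ne_top _ _)

end HasJointDensity

end JointDensity

section ConditionalExpectation

variable {Ω β : Type*} [MeasurableSpace Ω] [MeasurableSpace β] [MeasurableSingletonClass β]
  [Countable β] {P : Measure Ω} [IsFiniteMeasure P] {Y : Ω → β}

theorem condExp_comap_ae_eq_setAverage {E : Type*} [NormedAddCommGroup E] [NormedSpace ℝ E]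
    [CompleteSpace E] {Z : Ω → E} (hZ : Integrable Z P) (hY : Measurable Y) :
    P[Z|MeasurableSpace.comap Y inferInstance] =ᵐ[P]
      fun ω ↦ ⨍ ω' in Y ⁻¹' {Y ω}, Z ω' ∂P := by
  filter_upwards [ae_measure_preimage_singleton_ne_zero hY] with ω hω
  have condExp_const : ∀ ω' ∈ Y ⁻¹' {Y ω}, (P[Z|MeasurableSpace.comap Y inferInstance]) ω' =
      (P[Z|MeasurableSpace.comap Y inferInstance]) ω :=
    fun ω' hω' ↦ stronglyMeasurable_condExp.factorsThrough hω'
  have hfibre : MeasurableSet (Y ⁻¹' {Y ω}) := hY (measurableSet_singleton _)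
  rw [setAverage_eq, ← setIntegral_condExp hY.comap_le hZ ⟨_, measurableSet_singleton _, rfl⟩,
    ← setAverage_eq, setAverage_congr_fun hfibre (ae_of_all P condExp_const),
    setAverage_const hω (measure_ne_top P _)]

theorem HasJointDensity.condExp_ae_eq_densityMean {X : Ω → ℝ} {ν : Measure ℝ} {f : β → ℝ → ℝ≥0}
    (h : HasJointDensity P X Y ν f) (hX : Measurable X) (hf : ∀ b, Measurable (f b))
    (hY : Measurable Y) (hint : Integrable X P) :
    P[X|MeasurableSpace.comap Y inferInstance] =ᵐ[P] fun ω ↦ densityMean ν (f (Y ω)) := by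
  filter_upwards [condExp_comap_ae_eq_setAverage hint hY] with ω hω
  have integral_fibre : ∫ ω' in Y ⁻¹' {Y ω}, X ω' ∂P = ∫ x, f (Y ω) x * x ∂ν :=
    h.setIntegral_comp hX hf measurable_id (Y ω)
  rw [hω, setAverage_eq, integral_fibre, h.measureReal_preimage_singleton hX hf, densityMean,
    smul_eq_mul, inv_mul_eq_div]

end ConditionalExpectation

theorem measure_le_of_singleton_cross_le {β : Type*} [Finite β] [MeasurableSpace β]
    [MeasurableSingletonClass β] {Q Q' : Measure β} [IsProbabilityMeasure Q]
    [IsProbabilityMeasure Q'] {s : Set β}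
    (h : ∀ b ∈ s, ∀ c ∉ s, Q'.real {b} * Q.real {c} ≤ Q.real {b} * Q'.real {c}) :
    Q' s ≤ Q s := by
  classical
  have := Fintype.ofFinite β
  have hs : MeasurableSet s := s.toFinite.measurableSet
  have real_eq_sum (R : Measure β) [IsProbabilityMeasure R] (u : Set β)
      [DecidablePred (· ∈ u)] : R.real u = ∑ b with b ∈ u, R.real {b} := by
    rw [sum_measureReal_singleton, Finset.coe_filter_univ, Set.ofPred_mem_eq]
  have cross : Q'.real s * Q.real sᶜ ≤ Q.real s * Q'.real sᶜ := by
    simp only [real_eq_sum _ s, real_eq_sum _ sᶜ, Finset.sum_mul_sum]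
    exact Finset.sum_le_sum fun b hb ↦ Finset.sum_le_sum fun c hc ↦
      h b (Finset.mem_filter_univ b |>.1 hb) c (Finset.mem_filter_univ c |>.1 hc)
  rw [probReal_compl_eq_one_sub hs, probReal_compl_eq_one_sub hs] at cross
  exact (ENNReal.toReal_le_toReal (measure_ne_top _ _) (measure_ne_top _ _)).1
    (show Q'.real s ≤ Q.real s by linarith)

/-- The superlevel set of `M'` lies in a tail `{k ≤ T'}`, with `k` the least value of `T'` on it,
while almost all of the corresponding tail `{k ≤ T}` lies in the superlevel set of `M`. -/
theorem measure_superlevel_le_of_tail_le {Ω Ω' ι R : Type*} [MeasurableSpace Ω]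
    [MeasurableSpace Ω'] [LinearOrder ι] [Preorder R] {P : Measure Ω} {P' : Measure Ω'}
    {T : Ω → ι} {T' : Ω' → ι} {M : Ω → R} {M' : Ω' → R} (hT' : (Set.range T').Finite)
    (htail : ∀ k, P' {ω' | k ≤ T' ω'} ≤ P {ω | k ≤ T ω})
    (hM : ∀ᵐ ω' ∂P', ∀ᵐ ω ∂P, T' ω' ≤ T ω → M' ω' ≤ M ω) (t : R) :
    P' {ω' | t ≤ M' ω'} ≤ P {ω | t ≤ M ω} := by
  let A : Set Ω' := {ω' | t ≤ M' ω' ∧ ∀ᵐ ω ∂P, T' ω' ≤ T ω → M' ω' ≤ M ω}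
  have superlevel_le : P' {ω' | t ≤ M' ω'} ≤ P' A := measure_mono_ae <| by
    filter_upwards [hM] with ω' hω' ht using ⟨ht, hω'⟩
  rcases A.eq_empty_or_nonempty with hA | hA
  · rw [hA, measure_empty] at superlevel_le
    exact superlevel_le.trans zero_le
  obtain ⟨ω₀, ⟨ht, hω₀⟩, hmin⟩ :=
    Set.Finite.exists_minimalFor' T' A (hT'.subset (Set.image_subset_range T' A)) hA
  calc P' {ω' | t ≤ M' ω'} ≤ P' A := superlevel_le
    _ ≤ P' {ω' | T' ω₀ ≤ T' ω'} := measure_mono fun ω' hω' ↦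
      (le_total (T' ω₀) (T' ω')).elim id (hmin hω')
    _ ≤ P {ω | T' ω₀ ≤ T ω} := htail _
    _ ≤ P {ω | t ≤ M ω} := measure_mono_ae <| by
      filter_upwards [hω₀] with ω hω hk using ht.trans (hω hk)

section PosteriorMean

variable {Ω Ω' β : Type*} [MeasurableSpace Ω] [MeasurableSpace Ω'] [Finite β]
  [MeasurableSpace β] [MeasurableSingletonClass β] {P : Measure Ω} [IsProbabilityMeasure P]
  {P' : Measure Ω'} [IsProbabilityMeasure P'] {Y : Ω → β} {Y' : Ω' → β}

theorem HasJointDensity.measure_preimage_le_of_mlr {α : Type*} [MeasurableSpace α] [LinearOrder α]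
    {ν : Measure α} [SFinite ν] {X : Ω → α} {X' : Ω' → α} {f : β → α → ℝ≥0} {u : α → ℝ≥0}
    {S : Set α} {s : Set β}
    (h : HasJointDensity P X Y ν fun b x ↦ f b x * u x) (h' : HasJointDensity P' X' Y' ν f)
    (hX : Measurable X) (hY : Measurable Y) (hX' : Measurable X') (hY' : Measurable Y')
    (hf : ∀ b, Measurable (f b)) (hu : Measurable u)
    (hS : ∀ᵐ x ∂ν, x ∈ S) (hu_mono : MonotoneOn u S)
    (hmlr : ∀ b ∈ s, ∀ c ∉ s, MLRDominatesOn S (f b) (f c)) :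
    P' (Y' ⁻¹' s) ≤ P (Y ⁻¹' s) := by
  have hfu : ∀ b, Measurable fun x ↦ f b x * u x := fun b ↦ (hf b).mul hu
  have : IsProbabilityMeasure (P.map Y) := Measure.isProbabilityMeasure_map hY.aemeasurable
  have : IsProbabilityMeasure (P'.map Y') := Measure.isProbabilityMeasure_map hY'.aemeasurable
  rw [← Measure.map_apply hY s.toFinite.measurableSet,
    ← Measure.map_apply hY' s.toFinite.measurableSet]
  refine measure_le_of_singleton_cross_le fun b hb c hc ↦ ?_
  simp only [map_measureReal_apply hY (measurableSet_singleton _),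
    map_measureReal_apply hY' (measurableSet_singleton _),
    h.measureReal_preimage_singleton hX hfu, h'.measureReal_preimage_singleton hX' hf,
    NNReal.coe_mul]
  rw [mul_comm]
  exact (hmlr b hb c hc).integral_mul_mul_integral_le hS (w := fun x ↦ u x) hu_mono
    (h'.integrable hX' hf b) (h'.integrable hX' hf c)
    (by simpa only [NNReal.coe_mul] using h.integrable hX hfu b)
    (by simpa only [NNReal.coe_mul] using h.integrable hX hfu c)

theorem stmt18_general {ι : Type*} [LinearOrder ι] {T : β → ι} {ℓ : β → ℝ → ℝ≥0} {S : Set ℝ}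
    (hℓ : ∀ b, Measurable (ℓ b)) (hmlr : ∀ b c, T c ≤ T b → MLRDominatesOn S (ℓ b) (ℓ c))
    {X : Ω → ℝ} {X' : Ω' → ℝ} (hX : Measurable X) (hY : Measurable Y)
    (hX' : Measurable X') (hY' : Measurable Y') (hint : Integrable X P) (hint' : Integrable X' P')
    (hS : ∀ᵐ x ∂P'.map X', x ∈ S) {g : ℝ → ℝ≥0∞} (hg : Monotone g)
    (hprior : P.map X = (P'.map X').withDensity g)
    (h : HasJointDensity P X Y (P.map X) ℓ) (h' : HasJointDensity P' X' Y' (P'.map X') ℓ) (t : ℝ) :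
    P' {ω | t ≤ (P'[X'|MeasurableSpace.comap Y' inferInstance]) ω} ≤
      P {ω | t ≤ (P[X|MeasurableSpace.comap Y inferInstance]) ω} := by
  let u : ℝ → ℝ≥0 := fun x ↦ (g x).toNNReal
  let D : Set ℝ := S ∩ {x | g x < ∞}
  have hg_top : ∀ᵐ x ∂P'.map X', g x < ∞ := by
    refine ae_lt_top hg.measurable ?_
    rw [← setLIntegral_univ, ← withDensity_apply g .univ, ← hprior]
    exact measure_ne_top _ _
  have hD : ∀ᵐ x ∂P'.map X', x ∈ D := hS.and hg_top
  have hu : Measurable u := hg.measurable.ennreal_toNNReal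
  have hu_mono : MonotoneOn u D := fun y _ x hx hyx ↦ ENNReal.toNNReal_mono hx.2.ne (hg hyx)
  have hℓu : ∀ b, Measurable fun x ↦ ℓ b x * u x := fun b ↦ (hℓ b).mul hu
  have hmlrD : ∀ b c, T c ≤ T b → MLRDominatesOn D (ℓ b) (ℓ c) :=
    fun b c hcb ↦ (hmlr b c hcb).mono Set.inter_subset_left
  replace h : HasJointDensity P X Y (P'.map X') fun b x ↦ ℓ b x * u x :=
    (hprior ▸ h).of_withDensity hg.measurable hg_top hℓ
  refine measure_superlevel_le_of_tail_le (T := T ∘ Y) (T' := T ∘ Y')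
    ((Set.finite_range T).subset (Set.range_comp_subset_range Y' T)) (fun k ↦ ?_) ?_ t
  · exact h.measure_preimage_le_of_mlr (s := {b | k ≤ T b}) h' hX hY hX' hY' hℓ hu hD hu_mono
      fun b hb c hc ↦ hmlrD b c ((not_le.1 hc).le.trans hb)
  · filter_upwards [h'.condExp_ae_eq_densityMean hX' hℓ hY' hint',
      h'.ae_integral_pos hX' hℓ hY'] with ω' hM' hpos'
    filter_upwards [h.condExp_ae_eq_densityMean hX hℓu hY hint,
      h.ae_integral_pos hX hℓu hY] with ω hM hpos hle
    rw [hM, hM']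
    exact ((hmlrD _ _ hle).mul_monotoneOn hu_mono).densityMean_le hD hpos hpos'
      (h.integrable_mul hX hℓu measurable_id hint _)
      (h'.integrable_mul hX' hℓ measurable_id hint' _)

end PosteriorMean

section Bernoulli

variable {N : ℕ}

/-- The probability of the outcomes `b` in `N` independent Bernoulli(`x`) trials. The factors are
truncated at `0`, which has no effect for `x ∈ [0, 1]`. -/
noncomputable def bernoulliLikelihood (b : Fin N → Bool) (x : ℝ) : ℝ≥0 :=
  ∏ i, (if b i then x else 1 - x).toNNReal

/-- The number of successes, a sufficient statistic for Bernoulli trials. -/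
def successCount (b : Fin N → Bool) : ℕ := Finset.card {i | b i}

lemma measurable_bernoulliLikelihood (b : Fin N → Bool) : Measurable (bernoulliLikelihood b) := by
  refine Finset.measurable_fun_prod _ fun i _ ↦ Measurable.real_toNNReal ?_
  split_ifs <;> fun_prop

lemma bernoulliLikelihood_eq (b : Fin N → Bool) (x : ℝ) :
    bernoulliLikelihood b x =
      x.toNNReal ^ successCount b * (1 - x).toNNReal ^ (N - successCount b) := by
  have card_failures : Finset.card {i | ¬ b i} = N - successCount b := by
    rw [← Finset.compl_filter, Finset.card_compl, Fintype.card_fin, successCount]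
  simp only [bernoulliLikelihood, apply_ite Real.toNNReal, Finset.prod_ite, Finset.prod_const,
    card_failures, successCount]

lemma mlrDominatesOn_bernoulliLikelihood {b c : Fin N → Bool}
    (h : successCount c ≤ successCount b) (S : Set ℝ) :
    MLRDominatesOn S (bernoulliLikelihood b) (bernoulliLikelihood c) := by
  intro x _ y _ hyx
  have hb : successCount b ≤ N := (Finset.card_le_univ _).trans_eq (Fintype.card_fin N)
  obtain ⟨d, hd⟩ := Nat.exists_eq_add_of_le h
  obtain ⟨e, he⟩ := Nat.exists_eq_add_of_le hb
  have hNb : N - successCount b = e := by lia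
  have hNc : N - successCount c = e + d := by lia
  rw [bernoulliLikelihood_eq, bernoulliLikelihood_eq, bernoulliLikelihood_eq,
    bernoulliLikelihood_eq, hNb, hNc, hd]
  set k := successCount c
  set p := x.toNNReal
  set p' := y.toNNReal
  set q := (1 - x).toNNReal
  set q' := (1 - y).toNNReal
  have odds_le : p' * q ≤ p * q' :=
    mul_le_mul' (Real.toNNReal_mono hyx) (Real.toNNReal_mono (by linarith))
  calc p' ^ (k + d) * q' ^ e * (p ^ k * q ^ (e + d))
      = p ^ k * p' ^ k * q ^ e * q' ^ e * (p' * q) ^ d := by ring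
    _ ≤ p ^ k * p' ^ k * q ^ e * q' ^ e * (p * q') ^ d := by gcongr
    _ = p ^ (k + d) * q ^ e * (p' ^ k * q' ^ (e + d)) := by ring

lemma IsBernoulliSample.hasJointDensity {Ω : Type*} [MeasurableSpace Ω] {P : Measure Ω}
    {μ : Ω → ℝ} {B : Fin N → Ω → Bool} (h : IsBernoulliSample P μ B) (hμ : Measurable μ) :
    HasJointDensity P μ (fun ω i ↦ B i ω) (P.map μ) bernoulliLikelihood := by
  intro b
  ext A hA
  have hfibre : (fun ω i ↦ B i ω) ⁻¹' {b} = {ω | ∀ i, B i ω = b i} := by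
    ext ω
    exact funext_iff
  rw [Measure.map_apply hμ hA, Measure.restrict_apply (hμ hA), hfibre, h A hA b,
    withDensity_apply _ hA]
  simp only [bernoulliLikelihood, ENNReal.ofNNReal_finsetProd]
  rfl

end Bernoulli

/-- **MLR domination of priors yields stochastic domination of posterior means
(Lemma B.10).** Let `μ ~ P₀` and `μ' ~ P₀'` be priors on `[0,1]` with `P₀ = g·P₀'` for a
nondecreasing `g` (MLR domination), let `B_1, …, B_N` (resp. `B'_1, …, B'_N`) be
conditionally i.i.d. Bernoulli samples, and let `M, M'` be the respective posterior
means. Then `Pr[M' ≥ t] ≤ Pr[M ≥ t]` for every `t`. -/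
theorem stmt18 {Ω : Type*} [MeasurableSpace Ω] (P : Measure Ω) [IsProbabilityMeasure P]
    {Ω' : Type*} [MeasurableSpace Ω'] (P' : Measure Ω') [IsProbabilityMeasure P']
    {N : ℕ} (μ : Ω → ℝ) (B : Fin N → Ω → Bool) (μ' : Ω' → ℝ) (B' : Fin N → Ω' → Bool)
    (hμ : Measurable μ) (hB : ∀ i, Measurable (B i))
    (hμ' : Measurable μ') (hB' : ∀ i, Measurable (B' i))
    (hrange : ∀ᵐ ω ∂P, μ ω ∈ Set.Icc (0 : ℝ) 1)
    (hrange' : ∀ᵐ ω ∂P', μ' ω ∈ Set.Icc (0 : ℝ) 1)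
    (g : ℝ → ℝ≥0∞) (hg : Monotone g)
    (hMLR : Measure.map μ P = (Measure.map μ' P').withDensity g)
    (hcond : IsBernoulliSample P μ B) (hcond' : IsBernoulliSample P' μ' B')
    (t : ℝ) :
    P' {ω | t ≤ (P'[μ'|MeasurableSpace.comap (fun ω (i : Fin N) => B' i ω) inferInstance]) ω}
      ≤ P {ω | t ≤
        (P[μ|MeasurableSpace.comap (fun ω (i : Fin N) => B i ω) inferInstance]) ω} := by
  exact stmt18_general measurable_bernoulliLikelihood
    (fun _ _ h ↦ mlrDominatesOn_bernoulliLikelihood h Set.univ) hμ (measurable_pi_lambda _ hB) hμ'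
    (measurable_pi_lambda _ hB') (.of_mem_Icc 0 1 hμ.aemeasurable hrange)
    (.of_mem_Icc 0 1 hμ'.aemeasurable hrange') (ae_of_all _ Set.mem_univ) hg hMLR
    (hcond.hasJointDensity hμ) (hcond'.hasJointDensity hμ') t
end
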